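/- Let G be a graph and x, y two distinct vertices of G. Suppose G + xy is 2-connected, every vertex of G other than x and y has degree at least 3 in G, and G - x is triangle-free. Then G contains two (x,y)-paths P1, P2 with lengths satisfying ||P1|| = ||P2|| + 2 and ||P2|| ≥ 2. -/

import Mathlib

open SimpleGraph

/-- `G` is `k`-connected: more than `k` vertices, and deleting any set of fewer than
`k` vertices leaves a connected graph. -/
def KConnected {V : Type*} (G : SimpleGraph V) (k : ℕ) : Prop :=
  k < Nat.card V ∧ ∀ S : Set V, S.Finite → S.ncard < k → (G.induce Sᶜ).Connected

/-- `G + xy`: the graph `G` with the edge `xy` added (equal to `G` if already present). -/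
def AddEdge {V : Type*} (G : SimpleGraph V) (x y : V) : SimpleGraph V :=
  G ⊔ SimpleGraph.fromEdgeSet {s(x, y)}

/-- `G` has a cycle of length `n`. -/
def HasCycleLength {V : Type*} (G : SimpleGraph V) (n : ℕ) : Prop :=
  ∃ (v : V) (c : G.Walk v v), c.IsCycle ∧ c.length = n

/-- `G` contains `k` cycles of consecutive lengths. -/
def HasConsecCycles {V : Type*} (G : SimpleGraph V) (k : ℕ) : Prop :=
  ∃ m : ℕ, ∀ i < k, HasCycleLength G (m + i)

/-- `PathIn G U a b n`: there is an `(a,b)`-path of length `n` in `G` with all vertices in `U`. -/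
inductive PathIn {V : Type*} (G : SimpleGraph V) : Set V → V → V → ℕ → Prop
  | nil {U : Set V} {a : V} : a ∈ U → PathIn G U a a 0
  | cons {U : Set V} {a b c : V} {n : ℕ} :
      a ∈ U → G.Adj a b → PathIn G (U \ {a}) b c n → PathIn G U a c (n + 1)

namespace PathIn

variable {V : Type*} {G : SimpleGraph V} {U W : Set V} {a b c : V} {n m : ℕ}

theorem left_mem (h : PathIn G U a b n) : a ∈ U := by
  cases h <;> assumption

theorem right_mem (h : PathIn G U a b n) : b ∈ U := by
  induction h with
  | nil h => exact h
  | cons _ _ _ ih => exact ih.1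

theorem mono_of_adj {G' : SimpleGraph V} (h : PathIn G U a b n) (hUW : U ⊆ W)
    (hG : ∀ u ∈ U, ∀ v ∈ U, G.Adj u v → G'.Adj u v) : PathIn G' W a b n := by
  induction h generalizing W with
  | nil h => exact .nil (hUW h)
  | cons ha hab hp ih =>
    exact .cons (hUW ha) (hG _ ha _ hp.left_mem.1 hab)
      (ih (Set.sdiff_subset_sdiff_left hUW) fun u hu v hv => hG u hu.1 v hv.1)

theorem mono (h : PathIn G U a b n) (hUW : U ⊆ W) : PathIn G W a b n :=
  h.mono_of_adj hUW fun _ _ _ _ h => h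

theorem cons' (h : PathIn G U b c n) (hab : G.Adj a b) (ha : a ∉ U) :
    PathIn G (insert a U) a c (n + 1) :=
  .cons (Set.mem_insert _ _) hab (h.mono fun _ hv =>
    ⟨Set.mem_insert_of_mem _ hv, fun hva => ha (hva ▸ hv)⟩)

theorem append (h : PathIn G U a b n) (h' : PathIn G W b c m) (hUW : ∀ v ∈ U, v ∈ W → v = b) :
    PathIn G (U ∪ W) a c (n + m) := by
  induction h with
  | nil _ => simpa using h'.mono Set.subset_union_right
  | @cons U a d b n ha had hp ih =>
    have haW : a ∉ W := fun haW => hp.right_mem.2 (hUW a ha haW).symm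
    rw [Nat.add_right_comm]
    refine .cons (Or.inl ha) had ((ih h' fun v hv => hUW v hv.1).mono ?_)
    rintro v (hv | hv)
    · exact ⟨Or.inl hv.1, hv.2⟩
    · exact ⟨Or.inr hv, fun hva => haW (hva ▸ hv)⟩

theorem exists_walk (h : PathIn G U a b n) :
    ∃ p : G.Walk a b, p.IsPath ∧ p.length = n ∧ ∀ v ∈ p.support, v ∈ U := by
  induction h with
  | nil h => exact ⟨.nil, by simpa using h⟩
  | cons ha hab _ ih =>
    obtain ⟨p, hp, hl, hs⟩ := ih
    refine ⟨.cons hab p, ?_, by simp [hl], ?_⟩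
    · rw [SimpleGraph.Walk.cons_isPath_iff]
      exact ⟨hp, fun h => (hs _ h).2 rfl⟩
    · intro v hv
      rw [Walk.support_cons, List.mem_cons] at hv
      rcases hv with rfl | hv
      · exact ha
      · exact (hs v hv).1

theorem of_isPath (p : G.Walk a b) (hp : p.IsPath) (hs : ∀ v ∈ p.support, v ∈ U) :
    PathIn G U a b p.length := by
  induction p generalizing U with
  | nil => exact .nil (hs _ (by simp))
  | cons hab p ih =>
    rw [SimpleGraph.Walk.cons_isPath_iff] at hp
    refine .cons (hs _ (by simp)) hab (ih hp.1 fun v hv => ⟨hs v (by simp [hv]), ?_⟩)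
    rintro rfl
    exact hp.2 hv

theorem exists_of_walk (p : G.Walk a b) (hs : ∀ v ∈ p.support, v ∈ U) :
    ∃ n, PathIn G U a b n := by
  classical
  exact ⟨_, of_isPath p.bypass p.bypass_isPath
    fun v hv => hs v (p.support_bypass_subset_support hv)⟩

theorem exists_crossing (h : PathIn G U a b n) {S : Set V} (ha : a ∈ S) (hb : b ∉ S) :
    ∃ u ∈ S, ∃ v ∈ U, v ∉ S ∧ G.Adj u v := by
  induction h with
  | nil _ => exact absurd ha hb
  | @cons U a d b n _ had hp ih =>
    by_cases hd : d ∈ S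
    · obtain ⟨u, hu, v, hv, h⟩ := ih hd hb
      exact ⟨u, hu, v, hv.1, h⟩
    · exact ⟨a, ha, d, hp.left_mem.1, hd, had⟩

end PathIn

/-- The vertex set of the component of `G[W]` containing `r`. -/
def componentIn {V : Type*} (G : SimpleGraph V) (W : Set V) (r : V) : Set V :=
  {v | ∃ n, PathIn G W v r n}

section componentIn

variable {V : Type*} {G : SimpleGraph V} {W : Set V} {r u v : V} {n : ℕ}

theorem componentIn_subset : componentIn G W r ⊆ W := fun _ ⟨_, h⟩ => h.left_mem

theorem mem_componentIn_self (h : r ∈ W) : r ∈ componentIn G W r := ⟨0, .nil h⟩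

theorem mem_componentIn_of_adj (hv : v ∈ componentIn G W r) (hu : u ∈ W) (h : G.Adj u v) :
    u ∈ componentIn G W r := by
  obtain ⟨n, hn⟩ := hv
  obtain ⟨p, -, -, hs⟩ := hn.exists_walk
  refine PathIn.exists_of_walk (.cons h p) fun z hz => ?_
  rw [Walk.support_cons, List.mem_cons] at hz
  rcases hz with rfl | hz
  · exact hu
  · exact hs z hz

theorem PathIn.in_component (h : PathIn G W v r n) : PathIn G (componentIn G W r) v r n := by
  induction h with
  | nil h => exact .nil (mem_componentIn_self h)
  | cons ha hab hp ih =>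
    refine .cons ⟨_, .cons ha hab hp⟩ hab (ih.mono ?_)
    rintro z ⟨k, hk⟩
    exact ⟨⟨k, hk.mono Set.sdiff_subset⟩, hk.left_mem.2⟩

theorem exists_pathIn_componentIn (h : v ∈ componentIn G W r) :
    ∃ n, PathIn G (componentIn G W r) v r n := by
  obtain ⟨n, hn⟩ := h
  exact ⟨n, hn.in_component⟩

end componentIn

/-- The hypotheses on `G[U]` with roots `x` and `y`: 2-connectedness of `G[U] + xy` is expressed
through attachments of vertex sets avoiding both roots, and minimum degree 3 through the existence
of a neighbour avoiding any two given vertices. -/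
structure IsRooted {V : Type*} (G : SimpleGraph V) (U : Set V) (x y : V) : Prop where
  left_mem : x ∈ U
  right_mem : y ∈ U
  ne : x ≠ y
  exists_inner : ∃ v ∈ U, v ≠ x ∧ v ≠ y
  exists_adj : ∀ v ∈ U, v ≠ x → v ≠ y → ∀ p q, ∃ u ∈ U, G.Adj v u ∧ u ≠ p ∧ u ≠ q
  exists_attachment : ∀ S ⊆ U, x ∉ S → y ∉ S → S.Nonempty →
    ∀ w, ∃ v ∈ U, v ∉ S ∧ v ≠ w ∧ ∃ s ∈ S, G.Adj s v
  triangle_free : ∀ a ∈ U, ∀ b ∈ U, ∀ c ∈ U, a ≠ x → b ≠ x → c ≠ x →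
    G.Adj a b → G.Adj b c → ¬ G.Adj a c

/-- `G[U]` has two `(x,y)`-paths of lengths `n` and `n + 2` for some `n ≥ 2`. -/
def HasNicePaths {V : Type*} (G : SimpleGraph V) (U : Set V) (x y : V) : Prop :=
  ∃ n, 2 ≤ n ∧ PathIn G U x y n ∧ PathIn G U x y (n + 2)

theorem HasNicePaths.mono {V : Type*} {G : SimpleGraph V} {U W : Set V} {x y : V}
    (h : HasNicePaths G U x y) (hUW : U ⊆ W) : HasNicePaths G W x y := by
  obtain ⟨n, hn, h1, h2⟩ := h
  exact ⟨n, hn, h1.mono hUW, h2.mono hUW⟩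

theorem HasNicePaths.append {V : Type*} {G : SimpleGraph V} {U W : Set V} {x y z : V} {m : ℕ}
    (h : HasNicePaths G U x y) (h' : PathIn G W y z m) (hUW : ∀ v ∈ U, v ∈ W → v = y) :
    HasNicePaths G (U ∪ W) x z := by
  obtain ⟨n, hn, h1, h2⟩ := h
  exact ⟨n + m, by omega, h1.append h' hUW, Nat.add_right_comm n 2 m ▸ h2.append h' hUW⟩

/-- The graph in which `x` takes over all neighbours of `N` outside `x`, and loses its own. -/
def contractOnto {V : Type*} (G : SimpleGraph V) (x : V) (N : Set V) : SimpleGraph V :=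
  SimpleGraph.fromRel fun u v =>
    (u ≠ x ∧ v ≠ x ∧ G.Adj u v) ∨ (u = x ∧ ∃ a ∈ N, G.Adj a v)

section contractOnto

variable {V : Type*} {G : SimpleGraph V} {x u v : V} {N : Set V}

theorem contractOnto_adj_of_ne (hu : u ≠ x) (hv : v ≠ x) :
    (contractOnto G x N).Adj u v ↔ G.Adj u v := by
  simp only [contractOnto, SimpleGraph.fromRel_adj, hu, hv]
  have := G.adj_comm u v
  have : G.Adj u v → u ≠ v := fun h => h.ne
  tauto

theorem contractOnto_adj_left (hv : v ≠ x) :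
    (contractOnto G x N).Adj x v ↔ ∃ a ∈ N, G.Adj a v := by
  simp [contractOnto, SimpleGraph.fromRel_adj, hv, hv.symm]

theorem HasNicePaths.of_contractOnto {H : Set V} {r : V} (hxH : x ∉ H) (hrH : r ∈ H)
    (hN : ∀ a ∈ N, G.Adj x a ∧ a ∉ H)
    (h : HasNicePaths (contractOnto G x N) (insert x H) x r) :
    HasNicePaths G (insert x (N ∪ H)) x r := by
  have hxr : x ≠ r := fun h => hxH (h ▸ hrH)
  have lift : ∀ n, PathIn (contractOnto G x N) (insert x H) x r n →
      PathIn G (insert x (N ∪ H)) x r (n + 1) := by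
    intro n hn
    cases hn with
    | nil => exact absurd rfl hxr
    | @cons _ _ v _ n _ hxv hp =>
      have hsub : insert x H \ {x} ⊆ H := fun z hz => hz.1.resolve_left hz.2
      have hne : ∀ z ∈ insert x H \ {x}, z ≠ x := fun z hz => hz.2
      obtain ⟨a, haN, hav⟩ := (contractOnto_adj_left (hne v hp.left_mem)).1 hxv
      have hp' : PathIn G H v r n := hp.mono_of_adj hsub fun s hs t ht =>
        (contractOnto_adj_of_ne (hne s hs) (hne t ht)).1
      obtain ⟨hxa, haH⟩ := hN a haN
      refine ((hp'.cons' hav haH).cons' hxa ?_).mono ?_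
      · rintro (rfl | h)
        · exact hxa.ne rfl
        · exact hxH h
      · refine Set.insert_subset_insert (Set.insert_subset (Or.inl haN) ?_)
        exact Set.subset_union_right
  obtain ⟨n, hn, h1, h2⟩ := h
  exact ⟨n + 1, by omega, lift _ h1, lift _ h2⟩

theorem IsRooted.contractOnto {U H : Set V} {y r : V} (hG : IsRooted G U x y)
    (hHU : H ⊆ U) (hxH : x ∉ H) (hrH : r ∈ H) (hyH : y ∈ H → y = r)
    (hinner : ∃ h ∈ H, h ≠ r)
    (hconn : ∀ h ∈ H, ∃ n, PathIn G H h r n)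
    (hclosed : ∀ h ∈ H, h ≠ r → ∀ v ∈ U, G.Adj h v → v ∈ H ∨ v ∈ N)
    (huniq : ∀ h ∈ H, h ≠ r → ∀ a ∈ N, ∀ b ∈ N, G.Adj h a → G.Adj h b → a = b) :
    IsRooted (contractOnto G x N) (insert x H) x r := by
  have hne : ∀ h ∈ H, h ≠ x := fun h hh hx => hxH (hx ▸ hh)
  have hadj : ∀ {u v}, u ∈ H → v ∈ H → ((_root_.contractOnto G x N).Adj u v ↔ G.Adj u v) :=
    fun hu hv => contractOnto_adj_of_ne (hne _ hu) (hne _ hv)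
  have hney : ∀ h ∈ H, h ≠ r → h ≠ y := fun h hh hr hy => hr (hy.trans (hyH (hy ▸ hh)))
  refine ⟨Set.mem_insert _ _, Or.inr hrH, (hne r hrH).symm, ?_, ?_, ?_, ?_⟩
  · obtain ⟨h, hh, hr⟩ := hinner
    exact ⟨h, Or.inr hh, hne h hh, hr⟩
  · intro v hv hvx hvr p q
    have hvH : v ∈ H := hv.resolve_left hvx
    have hvy := hney v hvH hvr
    by_cases hex : ∃ a ∈ N, G.Adj v a
    · obtain ⟨a, haN, hva⟩ := hex
      have hother : ∀ q, ∃ u ∈ H, G.Adj v u ∧ u ≠ q := by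
        intro q
        obtain ⟨u, hu, hvu, hua, huq⟩ := hG.exists_adj v (hHU hvH) hvx hvy a q
        rcases hclosed v hvH hvr u hu hvu with h | h
        · exact ⟨u, h, hvu, huq⟩
        · exact absurd (huniq v hvH hvr u h a haN hvu hva) hua
      have hxv : (_root_.contractOnto G x N).Adj v x :=
        ((contractOnto_adj_left hvx).2 ⟨a, haN, hva.symm⟩).symm
      by_cases hp : p = x
      · obtain ⟨u, hu, hvu, huq⟩ := hother q
        exact ⟨u, Or.inr hu, (hadj hvH hu).2 hvu, hp ▸ hne u hu, huq⟩
      · by_cases hq : q = x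
        · obtain ⟨u, hu, hvu, hup⟩ := hother p
          exact ⟨u, Or.inr hu, (hadj hvH hu).2 hvu, hup, hq ▸ hne u hu⟩
        · exact ⟨x, Or.inl rfl, hxv, Ne.symm hp, Ne.symm hq⟩
    · obtain ⟨u, hu, hvu, hup, huq⟩ := hG.exists_adj v (hHU hvH) hvx hvy p q
      have huH := (hclosed v hvH hvr u hu hvu).resolve_right fun h => hex ⟨u, h, hvu⟩
      exact ⟨u, Or.inr huH, (hadj hvH huH).2 hvu, hup, huq⟩
  · intro S hS hxS hrS hSne w
    have hSH : S ⊆ H := fun s hs => (hS hs).resolve_left fun h => hxS (h ▸ hs)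
    by_cases hex : ∃ s ∈ S, ∃ a ∈ N, G.Adj s a
    · obtain ⟨s, hs, a, haN, hsa⟩ := hex
      by_cases hw : w = x
      · obtain ⟨n, hn⟩ := hconn s (hSH hs)
        obtain ⟨u, hu, v, hv, hvS, huv⟩ := hn.exists_crossing hs hrS
        exact ⟨v, Or.inr hv, hvS, hw ▸ hne v hv, u, hu, (hadj (hSH hu) hv).2 huv⟩
      · exact ⟨x, Or.inl rfl, hxS, Ne.symm hw, s, hs,
          ((contractOnto_adj_left (hne s (hSH hs))).2 ⟨a, haN, hsa.symm⟩).symm⟩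
    · obtain ⟨v, hv, hvS, hvw, s, hs, hsv⟩ := hG.exists_attachment S (hSH.trans hHU) hxS
        (fun hy => hrS (hyH (hSH hy) ▸ hy)) hSne w
      have hvH := (hclosed s (hSH hs) (fun h => hrS (h ▸ hs)) v hv hsv).resolve_right
        fun h => hex ⟨s, hs, v, h, hsv⟩
      exact ⟨v, Or.inr hvH, hvS, hvw, s, hs, (hadj (hSH hs) hvH).2 hsv⟩
  · intro a ha b hb c hc hax hbx hcx
    have ha := ha.resolve_left hax
    have hb := hb.resolve_left hbx
    have hc := hc.resolve_left hcx
    rw [hadj ha hb, hadj hb hc, hadj ha hc]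
    exact hG.triangle_free a (hHU ha) b (hHU hb) c (hHU hc) hax hbx hcx

end contractOnto

section Reduction

variable {V : Type*} {G : SimpleGraph V} {U : Set V} {x y : V}

/-- If `x` lies on a 4-cycle avoiding `y`, either the two ways around the cycle extend to nice
paths, or the vertex opposite to `x` separates and a smaller rooted graph does the job. -/
theorem IsRooted.hasNicePaths_of_fourCycle (hG : IsRooted G U x y)
    (ih : ∀ W ⊂ U, ∀ z, IsRooted G W x z → HasNicePaths G W x z)
    {a b c : V} (ha : a ∈ U) (hb : b ∈ U) (hc : c ∈ U) (hcx : c ≠ x) (hcy : c ≠ y)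
    (hay : a ≠ y) (hby : b ≠ y) (hab : a ≠ b)
    (hxa : G.Adj x a) (hxb : G.Adj x b) (hca : G.Adj c a) (hcb : G.Adj c b) :
    HasNicePaths G U x y := by
  set B : Set V := {v | v ∈ U ∧ v ≠ y ∧ G.Adj x v ∧ G.Adj c v} with hB
  set W : Set V := {v | v ∈ U ∧ v ≠ x ∧ v ≠ c ∧ v ∉ B} with hW
  set D : Set V := componentIn G W y with hD
  have hDW : D ⊆ W := componentIn_subset
  have hyD : y ∈ D := mem_componentIn_self ⟨hG.right_mem, hG.ne.symm, hcy.symm, fun h => h.2.1 rfl⟩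
  by_cases hex : ∃ p ∈ B, ∃ d ∈ D, G.Adj p d
  · obtain ⟨p, hp, d, hd, hpd⟩ := hex
    obtain ⟨q, hq, hqp⟩ : ∃ q ∈ B, q ≠ p := by
      by_cases hap : a = p
      · exact ⟨b, ⟨hb, hby, hxb, hcb⟩, fun h => hab (hap.trans h.symm)⟩
      · exact ⟨a, ⟨ha, hay, hxa, hca⟩, hap⟩
    obtain ⟨m, hm⟩ := exists_pathIn_componentIn hd
    rw [← hD] at hm
    have hBD : ∀ v ∈ B, v ∉ D := fun v hv hvD => (hDW hvD).2.2.2 hv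
    have hxD : x ∉ D := fun h => (hDW h).2.1 rfl
    have hcD : c ∉ D := fun h => (hDW h).2.2.1 rfl
    have hDU : D ⊆ U := fun v hv => (hDW hv).1
    have h1 := hm.cons' hpd (hBD p hp)
    have h2 := h1.cons' hp.2.2.1 (by simp [hxD, hp.2.2.1.ne])
    have h3 := ((h1.cons' hp.2.2.2 (by simp [hcD, hp.2.2.2.ne])).cons' hq.2.2.2.symm
      (by simp [hBD q hq, hqp, hq.2.2.2.ne.symm])).cons' hq.2.2.1
      (by simp [hxD, hcx.symm, hq.2.2.1.ne, hp.2.2.1.ne])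
    refine ⟨m + 2, by omega, h2.mono ?_, h3.mono ?_⟩
    · simp [Set.insert_subset_iff, hG.left_mem, hp.1, hDU]
    · simp [Set.insert_subset_iff, hG.left_mem, hp.1, hq.1, hc, hDU]
  · have hsep : ∀ v ∈ U, v ∉ D → v ≠ x → v ≠ c → ∀ d ∈ D, ¬ G.Adj v d := by
      intro v hv hvD hvx hvc d hd hvd
      by_cases hvB : v ∈ B
      · exact hex ⟨v, hvB, d, hd, hvd⟩
      · exact hvD (mem_componentIn_of_adj hd ⟨hv, hvx, hvc, hvB⟩ hvd)
    have hxD : x ∉ D := fun h => (hDW h).2.1 rfl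
    have hcD : c ∉ D := fun h => (hDW h).2.2.1 rfl
    have haD : a ∉ D := fun h => (hDW h).2.2.2 ⟨ha, hay, hxa, hca⟩
    have hroot : IsRooted G (U \ D) x c := by
      refine ⟨⟨hG.left_mem, hxD⟩, ⟨hc, hcD⟩, hcx.symm, ⟨a, ⟨ha, haD⟩, hxa.ne.symm, hca.ne.symm⟩,
        ?_, ?_, ?_⟩
      · intro v hv hvx hvc p q
        have hvy : v ≠ y := fun h => hv.2 (h ▸ hyD)
        obtain ⟨u, hu, hvu, hup, huq⟩ := hG.exists_adj v hv.1 hvx hvy p q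
        exact ⟨u, ⟨hu, fun hd => hsep v hv.1 hv.2 hvx hvc u hd hvu⟩, hvu, hup, huq⟩
      · intro S hS hxS hcS hSne w
        obtain ⟨v, hv, hvS, hvw, s, hs, hsv⟩ := hG.exists_attachment S
          (fun s hs => (hS hs).1) hxS (fun h => (hS h).2 hyD) hSne w
        refine ⟨v, ⟨hv, fun hd => ?_⟩, hvS, hvw, s, hs, hsv⟩
        exact hsep s (hS hs).1 (hS hs).2 (fun h => hxS (h ▸ hs)) (fun h => hcS (h ▸ hs)) v hd hsv
      · intro a ha b hb c hc
        exact hG.triangle_free a ha.1 b hb.1 c hc.1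
    obtain ⟨v, hv, hvS, hvx, s, hs, hsv⟩ := hG.exists_attachment ((U \ D) \ {x})
      (fun s hs => hs.1.1) (fun h => h.2 rfl) (fun h => h.1.2 hyD) ⟨c, ⟨hc, hcD⟩, hcx⟩ x
    have hvD : v ∈ D := by
      by_contra h
      exact hvS ⟨⟨hv, h⟩, hvx⟩
    have hsc : s = c := by
      by_contra h
      exact hsep s hs.1.1 hs.1.2 hs.2 h v hvD hsv
    subst hsc
    obtain ⟨m, hm⟩ := exists_pathIn_componentIn hvD
    have hss : U \ D ⊂ U := ⟨Set.sdiff_subset, fun h => (h hG.right_mem).2 hyD⟩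
    refine ((ih _ hss _ hroot).append (hm.cons' hsv hcD) ?_).mono ?_
    · rintro z hz (h | h)
      · exact h
      · exact absurd h hz.2
    · refine Set.union_subset Set.sdiff_subset (Set.insert_subset hc fun z hz => (hDW hz).1)

/-- If no vertex other than `x` and `y` has two neighbours in `N(x) \ {y}`, a part of `N(x)` can be
contracted onto `x`. -/
theorem IsRooted.hasNicePaths_of_unique (hG : IsRooted G U x y)
    (ih : ∀ W ⊂ U, ∀ G' : SimpleGraph V, ∀ z, IsRooted G' W x z → HasNicePaths G' W x z)
    (huniq : ∀ c ∈ U, c ≠ x → c ≠ y → ∀ a ∈ U, ∀ b ∈ U, a ≠ y → b ≠ y →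
      G.Adj x a → G.Adj x b → G.Adj c a → G.Adj c b → a = b) :
    HasNicePaths G U x y := by
  set N : Set V := {v | v ∈ U ∧ v ≠ y ∧ G.Adj x v} with hN
  have hNx : x ∉ N := fun h => h.2.2.ne rfl
  have hNU : N ⊆ U := fun v hv => hv.1
  have hinner : (U \ {x, y}).Nonempty := by
    obtain ⟨v, hv, hvx, hvy⟩ := hG.exists_inner
    exact ⟨v, hv, by simp [hvx, hvy]⟩
  have huniq' : ∀ c ∈ U, c ≠ x → c ≠ y → ∀ a ∈ N, ∀ b ∈ N, G.Adj c a → G.Adj c b → a = b :=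
    fun c hc hcx hcy a ha b hb => huniq c hc hcx hcy a ha.1 b hb.1 ha.2.1 hb.2.1 ha.2.2 hb.2.2
  have hNadj : ∀ v ∈ U, v ≠ y → v ∉ N → ¬ G.Adj v x := fun v hv hvy hvN h =>
    hvN ⟨hv, hvy, h.symm⟩
  by_cases hex : ∃ h ∈ componentIn G (U \ insert x N) y, h ≠ y
  · set D := componentIn G (U \ insert x N) y with hD
    have hDW : D ⊆ U \ insert x N := componentIn_subset
    have hyD : y ∈ D := mem_componentIn_self ⟨hG.right_mem, by
      rintro (h | h)
      · exact hG.ne h.symm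
      · exact h.2.1 rfl⟩
    have hxD : x ∉ D := fun h => (hDW h).2 (Or.inl rfl)
    have hDN : ∀ v ∈ D, v ∉ N := fun v hv h => (hDW hv).2 (Or.inr h)
    have hroot := hG.contractOnto (N := N) (fun v hv => (hDW hv).1) hxD hyD (fun _ => rfl) hex
      (fun h hh => exists_pathIn_componentIn hh)
      (by
        intro h hh hhy v hv hhv
        by_cases hvN : v ∈ N
        · exact Or.inr hvN
        · refine Or.inl (mem_componentIn_of_adj hh ⟨hv, ?_⟩ hhv.symm)
          rintro (rfl | h')
          · exact hNadj h (hDW hh).1 hhy (hDN h hh) hhv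
          · exact hvN h')
      (fun h hh hhy => huniq' h (hDW hh).1 (fun hx => hxD (hx ▸ hh)) hhy)
    obtain ⟨v, hv, hvS, hvy, s, hs, hsv⟩ := hG.exists_attachment (U \ {x, y})
      Set.sdiff_subset (by simp) (by simp) hinner y
    have hvx : v = x := by
      by_contra h
      exact hvS ⟨hv, by simp [h, hvy]⟩
    have hsN : s ∈ N := ⟨hs.1, fun h => hs.2 (by simp [h]), (hvx ▸ hsv).symm⟩
    have hss : insert x D ⊂ U := by
      refine ⟨Set.insert_subset hG.left_mem fun v hv => (hDW hv).1, fun h => ?_⟩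
      rcases h hs.1 with h | h
      · exact hNx (h ▸ hsN)
      · exact hDN s h hsN
    refine ((ih _ hss _ _ hroot).of_contractOnto hxD hyD
      fun a ha => ⟨ha.2.2, fun h => hDN a h ha⟩).mono ?_
    exact Set.insert_subset hG.left_mem (Set.union_subset hNU fun v hv => (hDW hv).1)
  · have hyN : ∀ v ∈ U, G.Adj v y → v = x ∨ v ∈ N := by
      intro v hv hvy
      by_contra h
      push Not at h
      refine hex ⟨v, mem_componentIn_of_adj (mem_componentIn_self ⟨hG.right_mem, ?_⟩)
        ⟨hv, ?_⟩ hvy, hvy.ne⟩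
      · rintro (h | h)
        · exact hG.ne h.symm
        · exact h.2.1 rfl
      · rintro (h' | h')
        · exact h.1 h'
        · exact h.2 h'
    have key : ∀ r ∈ N, ∀ T ⊆ U, ∀ m, r ∉ T → x ∉ T → y ∈ T →
        (∃ c ∈ U, c ≠ x ∧ c ∉ N ∧ c ∉ T ∧ G.Adj r c) →
        (∀ h ∈ U, h ≠ x → h ≠ y → h ∉ N → ∀ t ∈ T, t ≠ y → ¬ G.Adj h t) →
        PathIn G (insert r T) r y m → HasNicePaths G U x y := by
      rintro r hr T hTU m hrT hxT hyT ⟨c, hc, hcx, hcN, hcT, hrc⟩ hT hpath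
      set W : Set V := insert r (U \ (insert x (N ∪ T))) with hW
      set H := componentIn G W r with hH
      have hHW : H ⊆ W := componentIn_subset
      have hrH : r ∈ H := mem_componentIn_self (Or.inl rfl)
      have hWU : W ⊆ U := Set.insert_subset hr.1 Set.sdiff_subset
      have hHout : ∀ h ∈ H, h ≠ r → h ∈ U ∧ h ≠ x ∧ h ∉ N ∧ h ∉ T := by
        intro h hh hhr
        have := (hHW hh).resolve_left hhr
        simp only [Set.mem_sdiff, Set.mem_insert_iff, Set.mem_union, not_or] at this
        exact this
      have hxr : x ≠ r := hr.2.2.ne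
      have hxH : x ∉ H := fun h => (hHout x h hxr).2.1 rfl
      have hHT : ∀ h ∈ H, h ∉ T := by
        intro h hh
        by_cases hhr : h = r
        · exact hhr ▸ hrT
        · exact (hHout h hh hhr).2.2.2
      have hHN : ∀ v ∈ N \ insert r T, v ∉ H := by
        intro v hv hvH
        exact (hHout v hvH fun h => hv.2 (Or.inl h)).2.2.1 hv.1
      have hcH : c ∈ H := mem_componentIn_of_adj hrH
        (Or.inr ⟨hc, by simp [hcx, hcN, hcT]⟩) hrc.symm
      have hroot := hG.contractOnto (N := N \ insert r T) (hHW.trans hWU) hxH hrH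
        (fun h => absurd hyT (hHT y h)) ⟨c, hcH, hrc.ne.symm⟩
        (fun h hh => exists_pathIn_componentIn hh)
        (by
          intro h hh hhr v hv hhv
          obtain ⟨hhU, hhx, hhN, hhT⟩ := hHout h hh hhr
          have hhy : h ≠ y := fun e => hhT (e ▸ hyT)
          have hvx : v ≠ x := fun e => hNadj h hhU hhy hhN (e ▸ hhv)
          have hvT : v ∉ T := by
            intro hvT
            by_cases hvy : v = y
            · exact (hyN h hhU (hvy ▸ hhv)).elim hhx hhN
            · exact hT h hhU hhx hhy hhN v hvT hvy hhv
          by_cases hvr : v = r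
          · exact Or.inl (hvr ▸ hrH)
          by_cases hvN : v ∈ N
          · exact Or.inr ⟨hvN, by simp [hvr, hvT]⟩
          · exact Or.inl (mem_componentIn_of_adj hh (Or.inr ⟨hv, by simp [hvx, hvN, hvT]⟩)
              hhv.symm))
        (by
          intro h hh hhr a ha b hb
          obtain ⟨hhU, hhx, hhN, hhT⟩ := hHout h hh hhr
          exact huniq' h hhU hhx (fun e => hhT (e ▸ hyT)) a ha.1 b hb.1)
      have hss : insert x H ⊂ U := by
        refine ⟨Set.insert_subset hG.left_mem (hHW.trans hWU), fun h => ?_⟩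
        rcases h hG.right_mem with h | h
        · exact hG.ne h.symm
        · exact hHT y h hyT
      refine (((ih _ hss _ _ hroot).of_contractOnto hxH hrH
        fun a ha => ⟨ha.1.2.2, hHN a ha⟩).append hpath ?_).mono ?_
      · rintro v hv (h | h)
        · exact h
        · rcases hv with rfl | hv | hv
          · exact absurd h hxT
          · exact absurd (Or.inr h) hv.2
          · exact absurd h (hHT v hv)
      · refine Set.union_subset (Set.insert_subset hG.left_mem (Set.union_subset
          (Set.sdiff_subset.trans hNU) (hHW.trans hWU))) (Set.insert_subset hr.1 hTU)
    obtain ⟨v, hv, hvS, hvx, a, ha, hay⟩ := hG.exists_attachment (U \ {x, y})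
      Set.sdiff_subset (by simp) (by simp) hinner x
    have hvy : v = y := by
      by_contra h
      exact hvS ⟨hv, by simp [h, hvx]⟩
    subst hvy
    have hax : a ≠ x := fun h => ha.2 (by simp [h])
    have haN : a ∈ N := (hyN a ha.1 hay).resolve_left hax
    have hxy : x ≠ v := hG.ne
    by_cases hac : ∃ c ∈ U, c ≠ x ∧ c ∉ N ∧ c ≠ v ∧ G.Adj a c
    · refine key a haN {v} (by simpa using hv) 1 (by simpa using hay.ne) (by simpa using hxy)
        rfl hac (fun h _ _ _ _ t ht hne => absurd ht hne) ?_
      exact (PathIn.nil (Set.mem_singleton v)).cons' hay (by simpa using hay.ne)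
    · obtain ⟨b, hb, hab, hbx, hbv⟩ := hG.exists_adj a ha.1 hax hay.ne x v
      have hbN : b ∈ N := by
        by_contra h
        exact hac ⟨b, hb, hbx, h, hbv, hab⟩
      have hnbv : ¬ G.Adj b v := fun h =>
        hG.triangle_free a ha.1 b hb v hv hax hbx hxy.symm hab h hay
      obtain ⟨c, hc, hbc, hcx, hca⟩ := hG.exists_adj b hb hbx hbv x a
      have hcN : c ∉ N := fun h => hca (huniq' b hb hbx hbv c h a haN hbc hab.symm)
      have hcv : c ≠ v := fun h => hnbv (h ▸ hbc)
      refine key b hbN {a, v} (by simp [Set.insert_subset_iff, ha.1, hv]) 2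
        (by simp [hab.ne.symm, hbv]) (by simp [hax.symm, hxy]) (by simp)
        ⟨c, hc, hcx, hcN, by simp [hca, hcv], hbc⟩ ?_ ?_
      · intro h hh hhx hhv hhN t ht htv hht
        exact hac ⟨h, hh, hhx, hhN, hhv, (ht.resolve_right htv ▸ hht).symm⟩
      · exact ((PathIn.nil (Set.mem_singleton v)).cons' hay (by simpa using hay.ne)).cons' hab.symm
          (by simp [hab.ne.symm, hbv])

theorem IsRooted.hasNicePaths [Finite V] (hG : IsRooted G U x y) : HasNicePaths G U x y := by
  induction hn : U.ncard using Nat.strong_induction_on generalizing U G y with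
  | _ n ih =>
    have ih' : ∀ W ⊂ U, ∀ G' : SimpleGraph V, ∀ z, IsRooted G' W x z → HasNicePaths G' W x z :=
      fun W hW G' z h => ih _ (hn ▸ Set.ncard_lt_ncard hW (Set.toFinite U)) h rfl
    by_cases hex : ∀ c ∈ U, c ≠ x → c ≠ y → ∀ a ∈ U, ∀ b ∈ U, a ≠ y → b ≠ y →
      G.Adj x a → G.Adj x b → G.Adj c a → G.Adj c b → a = b
    · exact hG.hasNicePaths_of_unique ih' hex
    · push Not at hex
      obtain ⟨c, hc, hcx, hcy, a, ha, b, hb, hay, hby, hxa, hxb, hca, hcb, hab⟩ := hex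
      exact hG.hasNicePaths_of_fourCycle (fun W hW => ih' W hW G) ha hb hc hcx hcy hay hby hab
        hxa hxb hca hcb

end Reduction

/-- A 2-connected graph `G + xy` as in the main theorem is rooted at `x` and `y`. -/
theorem isRooted_univ {V : Type*} [Finite V] {G : SimpleGraph V} {x y : V} (hxy : x ≠ y)
    (h2 : KConnected (AddEdge G x y) 2)
    (hdeg : ∀ v, v ≠ x → v ≠ y → 3 ≤ (G.neighborSet v).ncard)
    (htf : (G.induce {v | v ≠ x}).CliqueFree 3) : IsRooted G Set.univ x y := by
  refine ⟨trivial, trivial, hxy, ?_, ?_, ?_, ?_⟩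
  · by_contra! h
    have hsub : (Set.univ : Set V) ⊆ {x, y} := fun v _ => by
      by_cases hv : v = x
      · exact Or.inl hv
      · exact Or.inr (h v trivial hv)
    have := Set.ncard_le_ncard hsub (Set.toFinite _)
    rw [Set.ncard_univ, Set.ncard_pair hxy] at this
    exact absurd h2.1 (by omega)
  · intro v _ hvx hvy p q
    by_contra! h
    have hsub : G.neighborSet v ⊆ {p, q} := fun u hu => by
      by_cases hup : u = p
      · exact Or.inl hup
      · exact Or.inr (h u trivial hu hup)
    have h1 := Set.ncard_le_ncard hsub (Set.toFinite _)
    have h3 := Set.ncard_insert_le p {q}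
    rw [Set.ncard_singleton] at h3
    have h4 := hdeg v hvx hvy
    omega
  · rintro S - hxS hyS ⟨s, hs⟩ w
    by_contra! h
    have hcard : ({w} \ S : Set V).ncard < 2 :=
      (Set.ncard_le_ncard Set.sdiff_subset (Set.toFinite _)).trans_lt (by simp)
    have hconn := h2.2 ({w} \ S) (Set.toFinite _) hcard
    obtain ⟨z, hzS, hzw⟩ : ∃ z, z ∉ S ∧ z ≠ w := by
      by_cases hw : x = w
      · exact ⟨y, hyS, fun e => hxy (hw.trans e.symm)⟩
      · exact ⟨x, hxS, hw⟩
    obtain ⟨p⟩ := hconn.preconnected ⟨s, fun hh => hh.2 hs⟩ ⟨z, fun hh => hzw hh.1⟩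
    obtain ⟨d, -, hd1, hd2⟩ := p.exists_boundary_dart (Subtype.val ⁻¹' S) hs hzS
    have hadj : (AddEdge G x y).Adj d.fst.1 d.snd.1 := d.adj
    have hdw : d.snd.1 ≠ w := fun e => d.snd.2 ⟨e, hd2⟩
    have hnot := h d.snd.1 trivial hd2 hdw d.fst.1 hd1
    have hfx : d.fst.1 ≠ x := fun e => hxS (e ▸ hd1)
    have hfy : d.fst.1 ≠ y := fun e => hyS (e ▸ hd1)
    simp [AddEdge, hnot, hfx, hfy] at hadj
  · intro a _ b _ c _ hax hbx hcx hab hbc hac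
    classical
    refine htf {⟨a, hax⟩, ⟨b, hbx⟩, ⟨c, hcx⟩} ?_
    rw [SimpleGraph.is3Clique_triple_iff]
    exact ⟨hab, hac, hbc⟩

/-- Lemma 4: if `G + xy` is 2-connected, every vertex other than `x, y` has degree at
least 3, and `G - x` is triangle-free, then `G` has two nice `(x,y)`-paths, i.e. two
`(x,y)`-paths whose lengths differ by exactly 2 and are both at least 2. -/
theorem two_nice_paths {V : Type*} [Fintype V] (G : SimpleGraph V) (x y : V) (hxy : x ≠ y)
    (h2 : KConnected (AddEdge G x y) 2)
    (hdeg : ∀ v, v ≠ x → v ≠ y → 3 ≤ (G.neighborSet v).ncard)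
    (htf : (G.induce {v | v ≠ x}).CliqueFree 3) :
    ∃ (P1 P2 : G.Walk x y), P1.IsPath ∧ P2.IsPath ∧
      2 ≤ P2.length ∧ P1.length = P2.length + 2 := by
  obtain ⟨n, hn, hp2, hp1⟩ := (isRooted_univ hxy h2 hdeg htf).hasNicePaths
  obtain ⟨P2, hP2, hl2, -⟩ := hp2.exists_walk
  obtain ⟨P1, hP1, hl1, -⟩ := hp1.exists_walk
  exact ⟨P1, P2, hP1, hP2, by omega, by omega⟩
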